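/- arXiv:1104.3659 — 2 statements merged into one kernel-verified Lean document; each statement's English description precedes it below -/
import Mathlib

section
/- Let a be a complex number which is not a nonzero integer. Then ∑_{n=1}^∞ (−1)^{n−1}/(n² − a²) = (1/4) ∑_{n=1}^∞ (−1)^{n−1} (10n² − 3n − a²) / (n (2n−1) (n² − a²) C(2n, n) · ∏_{j=1}^{n} (1 − a²/(n+j)²)). -/
/-!
The identity comes from a Wilf–Zeilberger pair. Write `b = a ^ 2` and, for `m ≥ 1`,

`h n m = (-1) ^ (m + 1) / (2 * m * (m ^ 2 - b)) * ∏_{i=1}^{n} i * (m + i - 1) / ((m + i) ^ 2 - b)`.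

Since `(m + n + 1) ^ 2 - m ^ 2 = (n + 1) * (n + 2 * m + 1)`, the two one-step recurrences of `h`
combine into `(n + 2 * m + 1) * h (n + 1) m = (n + m) * h n m + (m + 1) * h n (m + 1)`. With
`m = n + k + 1`, this says that `F n k = (n + 2 * m) * h n m` and
`G n k = F n k + (m + 1) * h n (m + 1)` satisfy `F n k - F (n + 1) k = G n k - G n (k + 1)`.
Summing this relation over the square `n, k < L` leaves four boundary sums. The near sides `F 0 k`
and `G n 0` are the terms of the two series, and the far sides are `O(1 / L)` because
`‖h n m‖ ≤ 1 / m ^ 3` for `n < m` and `m` large.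
-/

open Finset Filter Topology
open scoped Nat

section WZPair

variable {M : Type*} [AddCommGroup M] {F G : ℕ → ℕ → M}

theorem sum_range_sub_sum_range_of_wz
    (hFG : ∀ n k, F n k - F (n + 1) k = G n k - G n (k + 1)) (L K : ℕ) :
    ∑ k ∈ range K, F 0 k - ∑ k ∈ range K, F L k
      = ∑ n ∈ range L, G n 0 - ∑ n ∈ range L, G n K :=
  calc ∑ k ∈ range K, F 0 k - ∑ k ∈ range K, F L k
      = ∑ k ∈ range K, ∑ n ∈ range L, (F n k - F (n + 1) k) := by
        simp only [sum_range_sub' (fun n => F n _), sum_sub_distrib]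
    _ = ∑ n ∈ range L, ∑ k ∈ range K, (G n k - G n (k + 1)) := by
        rw [sum_comm]
        simp only [hFG]
    _ = ∑ n ∈ range L, (G n 0 - G n K) := by simp only [sum_range_sub' (G _)]
    _ = ∑ n ∈ range L, G n 0 - ∑ n ∈ range L, G n K := sum_sub_distrib _ _

theorem tsum_eq_tsum_of_wz [TopologicalSpace M] [ContinuousSub M] [T2Space M]
    (hFG : ∀ n k, F n k - F (n + 1) k = G n k - G n (k + 1))
    (hF : Summable (F 0)) (hG : Summable fun n => G n 0)
    (hF_far : Tendsto (fun L => ∑ k ∈ range L, F L k) atTop (𝓝 0))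
    (hG_far : Tendsto (fun L => ∑ n ∈ range L, G n L) atTop (𝓝 0)) :
    ∑' k, F 0 k = ∑' n, G n 0 := by
  have hF_lim := hF.hasSum.tendsto_sum_nat.sub hF_far
  have hG_lim := hG.hasSum.tendsto_sum_nat.sub hG_far
  simp only [sum_range_sub_sum_range_of_wz hFG, sub_zero] at hF_lim hG_lim
  exact tendsto_nhds_unique hF_lim hG_lim

end WZPair

section QuadraticDecay

variable {E : Type*} [SeminormedAddCommGroup E] {C : ℝ} {N : ℕ}

theorem summable_of_norm_le_div_sq [CompleteSpace E] {f : ℕ → E}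
    (hf : ∀ k, N ≤ k → ‖f k‖ ≤ C / ((k : ℝ) + 1) ^ 2) : Summable f := by
  have h_sq : Summable fun k : ℕ => C / ((k : ℝ) + 1) ^ 2 := by
    simpa [div_eq_mul_inv] using
      ((summable_nat_add_iff 1).2 (Real.summable_one_div_nat_pow.2 one_lt_two)).mul_left C
  refine Summable.of_norm_bounded_eventually_nat h_sq ?_
  filter_upwards [eventually_ge_atTop N] with k hk using hf k hk

theorem tendsto_sum_range_of_norm_le_div_sq {f : ℕ → ℕ → E}
    (hf : ∀ n k, N ≤ n + k → ‖f n k‖ ≤ C / ((n : ℝ) + k + 1) ^ 2) :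
    Tendsto (fun L => ∑ k ∈ range L, f L k) atTop (𝓝 0) := by
  have h_lim : Tendsto (fun L : ℕ => C * (1 / ((L : ℝ) + 1))) atTop (𝓝 0) := by
    simpa using tendsto_one_div_add_atTop_nhds_zero_nat.const_mul C
  refine squeeze_zero_norm' ?_ h_lim
  filter_upwards [eventually_ge_atTop N] with L hL
  have hC : 0 ≤ C := by
    have h := (le_div_iff₀ (by positivity)).1 (hf L 0 (by omega))
    exact le_trans (by positivity) h
  calc ‖∑ k ∈ range L, f L k‖
      ≤ ∑ _k ∈ range L, C / ((L : ℝ) + 1) ^ 2 := by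
        refine norm_sum_le_of_le _ fun k _ => (hf L k (by omega)).trans ?_
        gcongr
        linarith [k.cast_nonneg (α := ℝ)]
    _ = L * (C / ((L : ℝ) + 1) ^ 2) := by simp
    _ ≤ (L + 1) * (C / ((L : ℝ) + 1) ^ 2) := by gcongr; linarith
    _ = C * (1 / ((L : ℝ) + 1)) := by field_simp

end QuadraticDecay

theorem tsum_eq_tsum_of_wz_of_norm_le {E : Type*} [NormedAddCommGroup E] [CompleteSpace E]
    {F G : ℕ → ℕ → E} {C : ℝ} {N : ℕ}
    (hFG : ∀ n k, F n k - F (n + 1) k = G n k - G n (k + 1))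
    (hF : ∀ n k, N ≤ n + k → ‖F n k‖ ≤ C / ((n : ℝ) + k + 1) ^ 2)
    (hG : ∀ n k, N ≤ n + k → ‖G n k‖ ≤ C / ((n : ℝ) + k + 1) ^ 2) :
    ∑' k, F 0 k = ∑' n, G n 0 := by
  refine tsum_eq_tsum_of_wz hFG ?_ ?_ (tendsto_sum_range_of_norm_le_div_sq hF) ?_
  · exact summable_of_norm_le_div_sq (N := N) fun k hk => by simpa using hF 0 k (by omega)
  · exact summable_of_norm_le_div_sq (N := N) fun n hn => by simpa using hG n 0 (by omega)
  · refine tendsto_sum_range_of_norm_le_div_sq (f := fun k n => G n k) (C := C) (N := N)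
      fun k n hkn => ?_
    simpa only [add_comm (n : ℝ)] using hG n k (by omega)

section Algebra

variable {𝕜 : Type*} [Field 𝕜]

/-- The product `∏_{m=s}^{s+r-1} (m ^ 2 - b)`. For `b = a ^ 2` it is the product of the rising
factorials of length `r` starting at `s - a` and at `s + a`. -/
def sqSubProd (b : 𝕜) (s r : ℕ) : 𝕜 := ∏ i ∈ range r, (((s : 𝕜) + i) ^ 2 - b)

theorem sqSubProd_succ (b : 𝕜) (s r : ℕ) :
    sqSubProd b s (r + 1) = sqSubProd b s r * (((s : 𝕜) + r) ^ 2 - b) :=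
  prod_range_succ _ _

theorem sqSubProd_succ' (b : 𝕜) (s r : ℕ) :
    sqSubProd b s (r + 1) = ((s : 𝕜) ^ 2 - b) * sqSubProd b (s + 1) r := by
  simp only [sqSubProd, prod_range_succ', Nat.cast_add, Nat.cast_one, Nat.cast_zero, add_zero,
    add_right_comm _ (1 : 𝕜), ← add_assoc, mul_comm]

theorem sqSubProd_mul_eq_mul_sqSubProd_succ (b : 𝕜) (s r : ℕ) :
    sqSubProd b s r * (((s : 𝕜) + r) ^ 2 - b) = ((s : 𝕜) ^ 2 - b) * sqSubProd b (s + 1) r := by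
  rw [← sqSubProd_succ, sqSubProd_succ']

theorem sqSubProd_ne_zero {b : 𝕜} (hb : ∀ m : ℕ, m ≠ 0 → (m : 𝕜) ^ 2 ≠ b) {s : ℕ} (hs : s ≠ 0)
    (r : ℕ) : sqSubProd b s r ≠ 0 :=
  prod_ne_zero_iff.2 fun i _ => sub_ne_zero.2 (by exact_mod_cast hb (s + i) (by omega))

/-- The summand `h n m` from which both members of the WZ pair are built. The parameter `m` is
meant to be positive. -/
def wzKernel (b : 𝕜) (n m : ℕ) : 𝕜 :=
  (-1) ^ (m + 1) * (n ! * m.ascFactorial n) / (2 * m * sqSubProd b m (n + 1))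

/-- The first member of the WZ pair, restricting on `n = 0` to the terms of
`∑ (-1) ^ (m - 1) / (m ^ 2 - b)`. -/
def wzF (b : 𝕜) (n k : ℕ) : 𝕜 := (3 * n + 2 * k + 2) * wzKernel b n (n + k + 1)

/-- The second member of the WZ pair, restricting on `k = 0` to the terms of the accelerated
series. It is written with a shift of the kernel in place of the usual rational certificate. -/
def wzG (b : 𝕜) (n k : ℕ) : 𝕜 := wzF b n k + (n + k + 2) * wzKernel b n (n + k + 2)

theorem wzKernel_self_succ (b : 𝕜) (n : ℕ) :
    wzKernel b n (n + 1) = (-1) ^ n * (2 * n)! / (2 * (n + 1) * sqSubProd b (n + 1) (n + 1)) := by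
  have h_factorial : (n ! * (n + 1).ascFactorial n : 𝕜) = (2 * n)! := by
    rw [← Nat.cast_mul, n.factorial_mul_ascFactorial, two_mul]
  rw [wzKernel, h_factorial, pow_succ, pow_succ]
  push_cast
  ring

variable {b : 𝕜}

theorem wzKernel_succ_left (hb : ∀ m : ℕ, m ≠ 0 → (m : 𝕜) ^ 2 ≠ b) (n m : ℕ) :
    (((m : 𝕜) + n + 1) ^ 2 - b) * wzKernel b (n + 1) m
      = (n + 1) * (m + n) * wzKernel b n m := by
  have hC : ((m : 𝕜) + n + 1) ^ 2 - b ≠ 0 :=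
    sub_ne_zero.2 (by exact_mod_cast hb (m + n + 1) (by omega))
  rw [wzKernel, wzKernel, sqSubProd_succ b m (n + 1), Nat.factorial_succ, Nat.ascFactorial_succ]
  push_cast
  rw [← add_assoc (m : 𝕜) n 1]
  field_simp

variable [CharZero 𝕜]

theorem wzKernel_succ_right (hb : ∀ m : ℕ, m ≠ 0 → (m : 𝕜) ^ 2 ≠ b) (n : ℕ) {m : ℕ}
    (hm : m ≠ 0) :
    (((m : 𝕜) + n + 1) ^ 2 - b) * ((m + 1) * wzKernel b n (m + 1))
      = -(((m : 𝕜) ^ 2 - b) * ((m + n) * wzKernel b n m)) := by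
  have hm' : (m : 𝕜) ≠ 0 := Nat.cast_ne_zero.2 hm
  have hm1 : (m : 𝕜) + 1 ≠ 0 := Nat.cast_add_one_ne_zero m
  have hP := sqSubProd_ne_zero hb hm (n + 1)
  have hP' := sqSubProd_ne_zero hb m.succ_ne_zero (n + 1)
  have h_prod := sqSubProd_mul_eq_mul_sqSubProd_succ b m (n + 1)
  have h_asc : (m : 𝕜) * (m + 1).ascFactorial n = (m + n) * m.ascFactorial n := by
    exact_mod_cast m.succ_ascFactorial n
  rw [wzKernel, wzKernel, pow_succ]
  push_cast at h_prod ⊢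
  field_simp
  rw [← add_assoc] at h_prod
  linear_combination (-1 : 𝕜) ^ (m + 1 + 1) * n ! * (m * (m + 1).ascFactorial n * h_prod
    + ((m : 𝕜) ^ 2 - b) * sqSubProd b (m + 1) (n + 1) * h_asc)

theorem wzKernel_contiguous (hb : ∀ m : ℕ, m ≠ 0 → (m : 𝕜) ^ 2 ≠ b) (n : ℕ) {m : ℕ}
    (hm : m ≠ 0) :
    (n + 2 * m + 1) * wzKernel b (n + 1) m
      = (n + m) * wzKernel b n m + (m + 1) * wzKernel b n (m + 1) := by
  have hC : ((m : 𝕜) + n + 1) ^ 2 - b ≠ 0 :=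
    sub_ne_zero.2 (by exact_mod_cast hb (m + n + 1) (by omega))
  refine mul_left_cancel₀ hC ?_
  linear_combination (n + 2 * m + 1 : 𝕜) * wzKernel_succ_left hb n m - wzKernel_succ_right hb n hm

theorem wzF_sub_wzF_succ (hb : ∀ m : ℕ, m ≠ 0 → (m : 𝕜) ^ 2 ≠ b) (n k : ℕ) :
    wzF b n k - wzF b (n + 1) k = wzG b n k - wzG b n (k + 1) := by
  have h := wzKernel_contiguous hb n (n + k + 1).succ_ne_zero
  simp only [wzG, wzF, show n + 1 + k + 1 = n + k + 1 + 1 by omega, ← add_assoc] at h ⊢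
  push_cast at h ⊢
  linear_combination -h

theorem wzF_zero_left (b : 𝕜) (k : ℕ) : wzF b 0 k = (-1) ^ k / (((k : 𝕜) + 1) ^ 2 - b) := by
  have hk : (k : 𝕜) + 1 ≠ 0 := Nat.cast_add_one_ne_zero k
  simp only [wzF, wzKernel, sqSubProd, zero_add, prod_range_one, Nat.factorial_zero,
    Nat.ascFactorial_zero, pow_succ]
  push_cast
  field_simp
  ring

theorem prod_one_sub_div_sq (b : 𝕜) {s : ℕ} (hs : s ≠ 0) (r : ℕ) :
    ∏ i ∈ range r, (1 - b / ((s : 𝕜) + i) ^ 2)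
      = sqSubProd b s r / (s.ascFactorial r : 𝕜) ^ 2 := by
  rw [sqSubProd, Nat.ascFactorial_eq_prod_range, Nat.cast_prod, ← prod_pow, ← prod_div_distrib]
  refine prod_congr rfl fun i _ => ?_
  have hi : (s : 𝕜) + i ≠ 0 := by exact_mod_cast (by omega : s + i ≠ 0)
  push_cast
  field_simp

theorem choose_mul_prod_one_sub_div_sq (b : 𝕜) (N : ℕ) :
    ((2 * N).choose N : 𝕜) * ∏ j ∈ range N, (1 - b / ((N : 𝕜) + ((j : 𝕜) + 1)) ^ 2)
      = sqSubProd b (N + 1) N / (2 * N)! := by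
  have h_prod := prod_one_sub_div_sq b N.succ_ne_zero N
  have h_choose : ((N + 1).ascFactorial N : 𝕜) = N ! * (2 * N).choose N := by
    rw [two_mul]
    exact_mod_cast Nat.ascFactorial_eq_factorial_mul_choose N N
  have h_factorial : ((2 * N)! : 𝕜) = N ! * (N + 1).ascFactorial N := by
    rw [two_mul]
    exact_mod_cast (Nat.factorial_mul_ascFactorial N N).symm
  have h_choose_ne : ((2 * N).choose N : 𝕜) ≠ 0 :=
    Nat.cast_ne_zero.2 (Nat.choose_pos (by omega)).ne'
  have h_factorial_ne : (N ! : 𝕜) ≠ 0 := Nat.cast_ne_zero.2 N.factorial_ne_zero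
  push_cast at h_prod
  simp only [add_assoc, add_comm (1 : 𝕜)] at h_prod
  rw [h_prod, h_factorial, h_choose]
  field_simp

theorem wzG_zero_right_eq_div_sqSubProd (hb : ∀ m : ℕ, m ≠ 0 → (m : 𝕜) ^ 2 ≠ b) (n : ℕ) :
    wzG b n 0 = (-1) ^ n * (2 * n)! * (10 * ((n : 𝕜) + 1) ^ 2 - 3 * ((n : 𝕜) + 1) - b) /
      (2 * (((n : 𝕜) + 1) ^ 2 - b) * sqSubProd b (n + 2) (n + 1)) := by
  have hA : ((n : 𝕜) + 1) ^ 2 - b ≠ 0 := sub_ne_zero.2 (by exact_mod_cast hb (n + 1) (by omega))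
  have hB : (2 * (n : 𝕜) + 2) ^ 2 - b ≠ 0 :=
    sub_ne_zero.2 (by exact_mod_cast hb (2 * n + 2) (by omega))
  have hn : (n : 𝕜) + 1 ≠ 0 := Nat.cast_add_one_ne_zero n
  have hP := sqSubProd_ne_zero hb n.succ_ne_zero (n + 1)
  have hP' := sqSubProd_ne_zero hb (n + 1).succ_ne_zero (n + 1)
  have h_rec := wzKernel_succ_right hb n n.succ_ne_zero
  have h_prod := sqSubProd_mul_eq_mul_sqSubProd_succ b (n + 1) (n + 1)
  push_cast at h_rec h_prod
  have h_kernel : ((2 * (n : 𝕜) + 2) ^ 2 - b) * wzG b n 0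
      = (n + 1) * (10 * ((n : 𝕜) + 1) ^ 2 - 3 * ((n : 𝕜) + 1) - b) * wzKernel b n (n + 1) := by
    simp only [wzG, wzF, add_zero, Nat.cast_zero, mul_zero]
    linear_combination h_rec
  refine mul_left_cancel₀ hB ?_
  rw [h_kernel, wzKernel_self_succ]
  field_simp
  linear_combination
    -((2 * n)! : 𝕜) * (10 * ((n : 𝕜) + 1) ^ 2 - 3 * ((n : 𝕜) + 1) - b) * h_prod

theorem wzG_zero_right (hb : ∀ m : ℕ, m ≠ 0 → (m : 𝕜) ^ 2 ≠ b) (n : ℕ) :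
    wzG b n 0 = 1 / 4 * ((-1) ^ n * (10 * ((n : 𝕜) + 1) ^ 2 - 3 * ((n : 𝕜) + 1) - b) /
      (((n : 𝕜) + 1) * (2 * ((n : 𝕜) + 1) - 1) * (((n : 𝕜) + 1) ^ 2 - b) *
        (Nat.choose (2 * (n + 1)) (n + 1) : 𝕜) *
        ∏ j ∈ range (n + 1), (1 - b / (((n : 𝕜) + 1) + ((j : 𝕜) + 1)) ^ 2))) := by
  have hn : (n : 𝕜) + 1 ≠ 0 := Nat.cast_add_one_ne_zero n
  have hn' : (n : 𝕜) * 2 + 1 ≠ 0 := by exact_mod_cast (n * 2).succ_ne_zero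
  have h_choose := choose_mul_prod_one_sub_div_sq b (n + 1)
  have h_factorial : ((2 * (n + 1))! : 𝕜) = 2 * ((n : 𝕜) + 1) * (n * 2 + 1) * (2 * n)! := by
    rw [mul_add_one, Nat.factorial_succ, Nat.factorial_succ]
    push_cast
    ring
  have h_factorial_ne : ((2 * n)! : 𝕜) ≠ 0 := Nat.cast_ne_zero.2 (2 * n).factorial_ne_zero
  rw [h_factorial, Nat.cast_add_one] at h_choose
  rw [wzG_zero_right_eq_div_sqSubProd hb, mul_assoc _ ((2 * (n + 1)).choose (n + 1) : 𝕜), h_choose,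
    show 2 * ((n : 𝕜) + 1) - 1 = n * 2 + 1 by ring]
  field_simp
  ring

end Algebra

section Bounds

theorem two_pow_mul_factorial_le_ascFactorial {n m : ℕ} (hnm : n < m) :
    2 ^ n * n ! ≤ m.ascFactorial n := by
  calc 2 ^ n * n ! = ∏ i ∈ range n, 2 * (i + 1) := by
        rw [← prod_range_add_one_eq_factorial, ← pow_card_mul_prod, card_range]
    _ ≤ ∏ i ∈ range n, (m + i) := by
        refine prod_le_prod' fun i hi => ?_
        have := mem_range.1 hi
        omega
    _ = m.ascFactorial n := (Nat.ascFactorial_eq_prod_range m n).symm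

variable {𝕜 : Type*} [RCLike 𝕜] {b : 𝕜}

theorem sq_div_two_le_norm_sq_sub {m : ℕ} (hm : 2 * ‖b‖ ≤ (m : ℝ) ^ 2) :
    (m : ℝ) ^ 2 / 2 ≤ ‖(m : 𝕜) ^ 2 - b‖ := by
  have h_norm : ‖(m : 𝕜) ^ 2‖ = (m : ℝ) ^ 2 := by simp
  linarith [norm_sub_norm_le ((m : 𝕜) ^ 2) b]

theorem ascFactorial_sq_div_two_pow_le_norm_sqSubProd {s : ℕ} (hs : 2 * ‖b‖ ≤ (s : ℝ) ^ 2)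
    (r : ℕ) : (s.ascFactorial r : ℝ) ^ 2 / 2 ^ r ≤ ‖sqSubProd b s r‖ := by
  calc (s.ascFactorial r : ℝ) ^ 2 / 2 ^ r = ∏ i ∈ range r, ((s + i : ℕ) : ℝ) ^ 2 / 2 := by
        rw [Nat.ascFactorial_eq_prod_range, Nat.cast_prod, prod_div_distrib, prod_pow]
        simp
    _ ≤ ∏ i ∈ range r, ‖((s + i : ℕ) : 𝕜) ^ 2 - b‖ := by
        refine prod_le_prod (fun i _ => by positivity) fun i _ => sq_div_two_le_norm_sq_sub ?_
        refine hs.trans ?_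
        gcongr
        omega
    _ = ‖sqSubProd b s r‖ := by simp [sqSubProd, norm_prod]

theorem norm_wzKernel_le {n m : ℕ} (hnm : n < m) (hm : 2 * ‖b‖ ≤ (m : ℝ) ^ 2) :
    ‖wzKernel b n m‖ ≤ 1 / (m : ℝ) ^ 3 := by
  have hm0 : (0 : ℝ) < m := by exact_mod_cast (by omega : 0 < m)
  have hA : (2 : ℝ) ^ n * n ! ≤ m.ascFactorial n := by
    exact_mod_cast two_pow_mul_factorial_le_ascFactorial hnm
  have hA0 : (0 : ℝ) < m.ascFactorial n := hA.trans_lt' (by positivity)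
  have hP : ((m + n) * m.ascFactorial n : ℝ) ^ 2 / 2 ^ (n + 1) ≤ ‖sqSubProd b m (n + 1)‖ := by
    simpa [Nat.ascFactorial_succ] using ascFactorial_sq_div_two_pow_le_norm_sqSubProd hm (n + 1)
  calc ‖wzKernel b n m‖
      = n ! * m.ascFactorial n / (2 * m * ‖sqSubProd b m (n + 1)‖) := by simp [wzKernel]
    _ ≤ n ! * m.ascFactorial n
          / (2 * m * (((m + n) * m.ascFactorial n) ^ 2 / 2 ^ (n + 1))) := by gcongr
    _ = (2 ^ n * n !) / m.ascFactorial n / (m * (m + n) ^ 2) := by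
        field_simp
        ring
    _ ≤ 1 / (m * m ^ 2) := by
        gcongr
        · exact (div_le_one hA0).2 hA
        · linarith [n.cast_nonneg (α := ℝ)]
    _ = 1 / (m : ℝ) ^ 3 := by ring

theorem norm_wzF_le {n k : ℕ} (hnk : 2 * ‖b‖ ≤ ((n : ℝ) + k + 1) ^ 2) :
    ‖wzF b n k‖ ≤ 3 / ((n : ℝ) + k + 1) ^ 2 := by
  have h_ker : ‖wzKernel b n (n + k + 1)‖ ≤ 1 / ((n : ℝ) + k + 1) ^ 3 := by
    exact_mod_cast norm_wzKernel_le (by omega) (by exact_mod_cast hnk)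
  have h_coeff : ‖(3 * n + 2 * k + 2 : 𝕜)‖ ≤ 3 * ((n : ℝ) + k + 1) := by
    have h := RCLike.norm_natCast (K := 𝕜) (3 * n + 2 * k + 2)
    push_cast at h
    linarith [k.cast_nonneg (α := ℝ)]
  calc ‖wzF b n k‖ ≤ 3 * ((n : ℝ) + k + 1) * (1 / ((n : ℝ) + k + 1) ^ 3) := by
        rw [wzF, norm_mul]
        gcongr
    _ = 3 / ((n : ℝ) + k + 1) ^ 2 := by field_simp

theorem norm_wzG_le {n k : ℕ} (hnk : 2 * ‖b‖ ≤ ((n : ℝ) + k + 1) ^ 2) :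
    ‖wzG b n k‖ ≤ 4 / ((n : ℝ) + k + 1) ^ 2 := by
  have h_ker : ‖wzKernel b n (n + k + 2)‖ ≤ 1 / ((n : ℝ) + k + 2) ^ 3 := by
    have h : 2 * ‖b‖ ≤ ((n : ℝ) + k + 2) ^ 2 := hnk.trans (by gcongr; norm_num)
    exact_mod_cast norm_wzKernel_le (by omega) (by exact_mod_cast h)
  have h_coeff : ‖(n + k + 2 : 𝕜)‖ = (n : ℝ) + k + 2 := by
    exact_mod_cast RCLike.norm_natCast (K := 𝕜) (n + k + 2)
  calc ‖wzG b n k‖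
      ≤ 3 / ((n : ℝ) + k + 1) ^ 2 + ((n : ℝ) + k + 2) * (1 / ((n : ℝ) + k + 2) ^ 3) := by
        refine (norm_add_le _ _).trans ?_
        rw [norm_mul, h_coeff]
        gcongr
        exact norm_wzF_le hnk
    _ = 3 / ((n : ℝ) + k + 1) ^ 2 + 1 / ((n : ℝ) + k + 2) ^ 2 := by field_simp
    _ ≤ 3 / ((n : ℝ) + k + 1) ^ 2 + 1 / ((n : ℝ) + k + 1) ^ 2 := by gcongr; norm_num
    _ = 4 / ((n : ℝ) + k + 1) ^ 2 := by ring

theorem tsum_wzF_zero_left_eq_tsum_wzG_zero_right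
    (hb : ∀ m : ℕ, m ≠ 0 → (m : 𝕜) ^ 2 ≠ b) : ∑' k, wzF b 0 k = ∑' n, wzG b n 0 := by
  have h_large : ∀ n k : ℕ, ⌈2 * ‖b‖⌉₊ ≤ n + k → 2 * ‖b‖ ≤ ((n : ℝ) + k + 1) ^ 2 := by
    intro n k hnk
    have h : 2 * ‖b‖ ≤ (n : ℝ) + k := by exact_mod_cast Nat.ceil_le.1 hnk
    nlinarith [norm_nonneg b]
  refine tsum_eq_tsum_of_wz_of_norm_le (C := 4) (wzF_sub_wzF_succ hb)
    (fun n k hnk => (norm_wzF_le (h_large n k hnk)).trans ?_)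
    fun n k hnk => norm_wzG_le (h_large n k hnk)
  gcongr
  norm_num

end Bounds

theorem natCast_sq_ne_sq_of_forall_ne_intCast {R : Type*} [CommRing R] [NoZeroDivisors R] {a : R}
    (ha : ∀ m : ℤ, m ≠ 0 → a ≠ m) (m : ℕ) (hm : m ≠ 0) : (m : R) ^ 2 ≠ a ^ 2 := by
  rw [Ne, sq_eq_sq_iff_eq_or_eq_neg, not_or]
  exact ⟨fun h => ha m (by exact_mod_cast hm) (by simp [h]),
    fun h => ha (-m) (by simpa using hm) (by simp [h])⟩

theorem stmt5_general {𝕜 : Type*} [RCLike 𝕜] {b : 𝕜} (hb : ∀ m : ℕ, m ≠ 0 → (m : 𝕜) ^ 2 ≠ b) :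
    ∑' n : ℕ, (-1 : 𝕜) ^ n / (((n : 𝕜) + 1) ^ 2 - b)
      = (1 / 4) * ∑' n : ℕ,
          (-1 : 𝕜) ^ n * (10 * ((n : 𝕜) + 1) ^ 2 - 3 * ((n : 𝕜) + 1) - b) /
            (((n : 𝕜) + 1) * (2 * ((n : 𝕜) + 1) - 1) * (((n : 𝕜) + 1) ^ 2 - b) *
              (Nat.choose (2 * (n + 1)) (n + 1) : 𝕜) *
              ∏ j ∈ Finset.range (n + 1),
                (1 - b / (((n : 𝕜) + 1) + ((j : 𝕜) + 1)) ^ 2)) := by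
  simp only [← tsum_mul_left, ← wzF_zero_left, ← wzG_zero_right hb]
  exact tsum_wzF_zero_left_eq_tsum_wzG_zero_right hb

theorem stmt5 (a : ℂ) (ha : ∀ m : ℤ, m ≠ 0 → a ≠ (m : ℂ)) :
    ∑' n : ℕ, (-1 : ℂ) ^ n / (((n : ℂ) + 1) ^ 2 - a ^ 2)
      = (1 / 4) * ∑' n : ℕ,
          (-1 : ℂ) ^ n * (10 * ((n : ℂ) + 1) ^ 2 - 3 * ((n : ℂ) + 1) - a ^ 2) /
            (((n : ℂ) + 1) * (2 * ((n : ℂ) + 1) - 1) * (((n : ℂ) + 1) ^ 2 - a ^ 2) *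
              (Nat.choose (2 * (n + 1)) (n + 1) : ℂ) *
              ∏ j ∈ Finset.range (n + 1),
                (1 - a ^ 2 / (((n : ℂ) + 1) + ((j : ℂ) + 1)) ^ 2)) :=
  stmt5_general (natCast_sq_ne_sq_of_forall_ne_intCast ha)
end

section
/- Let K = ∑_{n=1}^∞ χ(n)/n², where χ(n) is the Legendre symbol (n/3), i.e. χ(n) = 1 if n ≡ 1 (mod 3), χ(n) = −1 if n ≡ 2 (mod 3), and χ(n) = 0 if 3 | n. Then K = ∑_{n=1}^∞ (−27)^{n−1} (5535n³ − 4689n² + 1110n − 80) / (n³ (3n−1)(3n−2) C(6n, 3n)² C(3n, n)). -/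
/-- The Legendre symbol `(n/3)`: `1` if `n ≡ 1 (mod 3)`, `-1` if `n ≡ 2 (mod 3)`,
`0` if `3 ∣ n`. -/
def chi3 (n : ℕ) : ℝ := if n % 3 = 1 then 1 else if n % 3 = 2 then -1 else 0

/-- `K = ∑_{n ≥ 1} (n/3) / n²`. -/
noncomputable def Kconst : ℝ := ∑' n : ℕ, chi3 (n + 1) / ((n : ℝ) + 1) ^ 2

/-!
Taking the terms of `K` three at a time gives `K = ∑ₖ F 0 k` with
`F 0 k = 1 / (3 * k + 1) ^ 2 - 1 / (3 * k + 2) ^ 2`, which is the row `n = 0` of a family `F n k` of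
very-well-poised hypergeometric summands. Along antidiagonals this family satisfies
`F n (k + 1) - F (n + 1) k = V n (k + 1) - V n (k + 2)` for a hypergeometric term `V` with a
quadratic numerator, so `G n k = F n k + V n (k + 1)` is a WZ mate of `F`:
`F n k - F (n + 1) k = G n k - G n (k + 1)`.
Summing this relation over `k`, and then over `n`, gives `K = ∑ₙ G n 0`, the required series. The
convergence comes from `|F (n + 1) k| ≤ |F n (k + 1)| / 2`, which bounds every row by a
geometrically small multiple of a tail of the row `n = 0`.
-/

open Filter Topology Finset
open scoped Nat

section Series

variable {E : Type*} [AddCommGroup E]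

theorem hasSum_sub_succ_of_tendsto [TopologicalSpace E] [IsTopologicalAddGroup E] [T2Space E]
    {f : ℕ → E} {l : E} (hf : Summable fun n ↦ f n - f (n + 1)) (hl : Tendsto f atTop (𝓝 l)) :
    HasSum (fun n ↦ f n - f (n + 1)) (f 0 - l) := by
  rw [hf.hasSum_iff_tendsto_nat]
  simpa only [sum_range_sub'] using hl.const_sub (f 0)

variable [UniformSpace E] [IsUniformAddGroup E] [CompleteSpace E] [T2Space E]

theorem hasSum_of_wz_pair {F G : ℕ → ℕ → E}
    (hFG : ∀ n k, F n k - F (n + 1) k = G n k - G n (k + 1))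
    (hF : Summable fun p : ℕ × ℕ ↦ F p.1 p.2) (hG : ∀ n, Tendsto (G n) atTop (𝓝 0)) :
    HasSum (fun n ↦ G n 0) (∑' k, F 0 k) := by
  have summable_row (n : ℕ) : Summable (F n) := hF.prod_factor n
  have row_diff (n : ℕ) : ∑' k, F n k - ∑' k, F (n + 1) k = G n 0 := by
    have hdiff := (summable_row n).sub (summable_row (n + 1))
    rw [← (summable_row n).tsum_sub (summable_row (n + 1))]
    simp only [hFG] at hdiff ⊢
    rw [(hasSum_sub_succ_of_tendsto hdiff (hG n)).tsum_eq, sub_zero]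
  have summable_rows : Summable fun n ↦ ∑' k, F n k := hF.prod
  have hsum := hasSum_sub_succ_of_tendsto
    (summable_rows.sub ((summable_nat_add_iff 1).mpr summable_rows))
    summable_rows.tendsto_atTop_zero
  simpa only [row_diff, sub_zero] using hsum

theorem tsum_eq_tsum_sum_fin_mul_add {f : ℕ → E} (hf : Summable f) (m : ℕ) [NeZero m] :
    ∑' n, f n = ∑' k, ∑ j : Fin m, f (k * m + j) := by
  have hprod : Summable (f ∘ (Nat.divModEquiv m).symm) :=
    hf.comp_injective (Nat.divModEquiv m).symm.injective
  rw [← (Nat.divModEquiv m).symm.tsum_eq f]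
  exact hprod.tsum_prod.trans (tsum_congr fun _ ↦ tsum_fintype _)

end Series

theorem summable_one_div_nat_add_one_pow {p : ℕ} (hp : 1 < p) :
    Summable fun n : ℕ ↦ 1 / ((n : ℝ) + 1) ^ p := by
  simpa using (summable_nat_add_iff 1).mpr (Real.summable_one_div_nat_pow.mpr hp)

/-- The part of the WZ summand `dougallTerm n k` that depends on `n` only. It carries the gamma
factors of Dougall's evaluation, which make the summand a member of a WZ pair. -/
noncomputable def dougallWeight (n : ℕ) : ℝ :=
  27 * (-27) ^ n * (3 * n + 1)! * n ! ^ 3 / (2 * n)!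

/-- The factorial quotient whose square carries the `k`-dependence of `dougallCore n k`; up to a
factor depending on `n` only it is
`(n + 1/3)ₖ (n + 2/3)ₖ / ((2 * n + 4/3)ₖ (2 * n + 5/3)ₖ)` in Pochhammer symbols. -/
noncomputable def dougallQuot (n k : ℕ) : ℝ :=
  (3 * (n + k))! * (2 * n + k + 1)! / ((n + k)! * (6 * n + 3 * k + 3)!)

/-- The WZ summand `dougallTerm n k` without its very-well-poised linear factor. -/
noncomputable def dougallCore (n k : ℕ) : ℝ :=
  dougallWeight n * dougallQuot n k ^ 2

/-- The WZ summand: up to a factor depending on `n` only, the summand of Dougall's very-well-poised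
series with parameters `a = 3 * n + 1`, `b = c = n + 1/3`, `d = e = n + 2/3`. -/
noncomputable def dougallTerm (n k : ℕ) : ℝ :=
  dougallCore n k * (3 * n + 2 * k + 1)

theorem dougallWeight_succ (n : ℕ) :
    dougallWeight (n + 1) =
      -(81 * (3 * n + 2) * (3 * n + 4) * (n + 1) ^ 3 / (2 * (2 * n + 1))) * dougallWeight n := by
  have h₃ : 3 * (n + 1) + 1 = 3 * n + 1 + 3 := by ring
  have h₂ : 2 * (n + 1) = 2 * n + 2 := by ring
  simp only [dougallWeight, h₃, h₂, Nat.factorial_succ]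
  push_cast
  field_simp
  ring

theorem dougallQuot_succ_right (n k : ℕ) :
    dougallQuot n (k + 1) =
      (3 * n + 3 * k + 1) * (3 * n + 3 * k + 2) / ((6 * n + 3 * k + 4) * (6 * n + 3 * k + 5)) *
        dougallQuot n k := by
  have h₁ : 3 * (n + k + 1) = 3 * (n + k) + 3 := by ring
  have h₂ : 2 * n + (k + 1) + 1 = 2 * n + k + 1 + 1 := by ring
  have h₃ : n + (k + 1) = n + k + 1 := by ring
  have h₄ : 6 * n + 3 * (k + 1) + 3 = 6 * n + 3 * k + 3 + 3 := by ring
  simp only [dougallQuot, h₁, h₂, h₃, h₄, Nat.factorial_succ]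
  push_cast
  field_simp
  ring

theorem dougallQuot_succ_left (n k : ℕ) :
    dougallQuot (n + 1) k =
      dougallQuot n (k + 1) / (3 * ((6 * n + 3 * k + 7) * (6 * n + 3 * k + 8))) := by
  have h₁ : n + 1 + k = n + (k + 1) := by ring
  have h₂ : 2 * (n + 1) + k + 1 = 2 * n + (k + 1) + 1 + 1 := by ring
  have h₃ : 6 * (n + 1) + 3 * k + 3 = 6 * n + 3 * (k + 1) + 3 + 3 := by ring
  simp only [dougallQuot, h₁, h₂, h₃, Nat.factorial_succ]
  push_cast
  field_simp
  ring

theorem dougallCore_succ_right (n k : ℕ) :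
    dougallCore n (k + 1) =
      ((3 * n + 3 * k + 1) * (3 * n + 3 * k + 2) /
          ((6 * n + 3 * k + 4) * (6 * n + 3 * k + 5))) ^ 2 *
        dougallCore n k := by
  rw [dougallCore, dougallCore, dougallQuot_succ_right]
  ring

theorem dougallCore_succ_left (n k : ℕ) :
    dougallCore (n + 1) k =
      -(9 * (3 * n + 2) * (3 * n + 4) * (n + 1) ^ 3 /
          (2 * (2 * n + 1) * ((6 * n + 3 * k + 7) * (6 * n + 3 * k + 8)) ^ 2)) *
        dougallCore n (k + 1) := by
  rw [dougallCore, dougallCore, dougallWeight_succ, dougallQuot_succ_left]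
  field_simp
  ring

theorem dougallTerm_zero_left (k : ℕ) :
    dougallTerm 0 k = 1 / (3 * k + 1) ^ 2 - 1 / (3 * k + 2) ^ 2 := by
  simp only [dougallTerm, dougallCore, dougallWeight, dougallQuot, mul_zero, zero_add,
    Nat.factorial_succ, Nat.factorial_zero, pow_zero]
  push_cast
  field_simp
  ring

theorem abs_dougallTerm_zero_left_le (k : ℕ) : |dougallTerm 0 k| ≤ 1 / ((k : ℝ) + 1) ^ 3 := by
  have hterm : dougallTerm 0 k = 3 * (2 * k + 1) / ((3 * k + 1) * (3 * k + 2)) ^ 2 := by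
    rw [dougallTerm_zero_left]
    field_simp
    ring
  -- After clearing denominators the difference is a polynomial with nonnegative coefficients.
  rw [hterm, abs_of_nonneg (by positivity), div_le_div_iff₀ (by positivity) (by positivity),
    ← sub_nonneg]
  ring_nf
  positivity

theorem abs_dougallTerm_succ_left_le (n k : ℕ) :
    |dougallTerm (n + 1) k| ≤ 1 / 2 * |dougallTerm n (k + 1)| := by
  set r : ℝ := 9 * (3 * n + 2) * (3 * n + 4) * (n + 1) ^ 3 * (3 * n + 2 * k + 4) /
    (2 * (2 * n + 1) * ((6 * n + 3 * k + 7) * (6 * n + 3 * k + 8)) ^ 2 * (3 * n + 2 * k + 3))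
    with hr
  have hratio : dougallTerm (n + 1) k = -r * dougallTerm n (k + 1) := by
    rw [dougallTerm, dougallTerm, dougallCore_succ_left, hr]
    push_cast
    field_simp
    ring
  have hr_le : r ≤ 1 / 2 := by
    rw [hr, div_le_div_iff₀ (by positivity) (by positivity), ← sub_nonneg]
    ring_nf
    positivity
  rw [hratio, abs_mul, abs_neg, abs_of_nonneg (by positivity : 0 ≤ r)]
  gcongr

theorem abs_dougallTerm_le (n k : ℕ) :
    |dougallTerm n k| ≤ (1 / 2) ^ n * (1 / ((k : ℝ) + 1) ^ 3) := by
  induction n generalizing k with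
  | zero => simpa using abs_dougallTerm_zero_left_le k
  | succ n ih =>
    calc |dougallTerm (n + 1) k| ≤ 1 / 2 * |dougallTerm n (k + 1)| :=
          abs_dougallTerm_succ_left_le n k
      _ ≤ 1 / 2 * ((1 / 2) ^ n * (1 / (((k + 1 : ℕ) : ℝ) + 1) ^ 3)) := by gcongr; exact ih (k + 1)
      _ = (1 / 2) ^ (n + 1) * (1 / (((k + 1 : ℕ) : ℝ) + 1) ^ 3) := by ring
      _ ≤ (1 / 2) ^ (n + 1) * (1 / ((k : ℝ) + 1) ^ 3) := by gcongr; exact Nat.le_succ k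

theorem summable_dougallTerm : Summable fun p : ℕ × ℕ ↦ dougallTerm p.1 p.2 := by
  have hbound : Summable fun p : ℕ × ℕ ↦ (1 / 2 : ℝ) ^ p.1 * (1 / ((p.2 : ℝ) + 1) ^ 3) :=
    summable_geometric_two.mul_of_nonneg (summable_one_div_nat_add_one_pow (by norm_num))
      (fun _ ↦ by positivity) (fun _ ↦ by positivity)
  exact hbound.of_norm_bounded fun p ↦ abs_dougallTerm_le p.1 p.2

/-- The polynomial solution, in `x = n` and `y = k`, of the Gosper equation `gosper_equation`. -/
noncomputable def gosperNumerator (x y : ℝ) : ℝ :=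
  117 * x ^ 2 + 90 * x * y + 18 * y ^ 2 + 99 * x + 36 * y + 22

/-- The Gosper antidifference, in `k`, of the antidiagonal difference of `dougallTerm`. -/
noncomputable def gosperTerm (n k : ℕ) : ℝ :=
  dougallCore n k * gosperNumerator n k / (18 * (2 * n + 1))

/-- The WZ mate of `dougallTerm`. The summand `dougallTerm n k` in it converts differences along
antidiagonals into differences along columns. -/
noncomputable def dougallMate (n k : ℕ) : ℝ :=
  dougallTerm n k + gosperTerm n (k + 1)

theorem gosper_equation {x y : ℝ} (hx : 0 ≤ x) (hy : 0 ≤ y) :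
    3 * x + 2 * y + 1 +
        9 * (3 * x + 2) * (3 * x + 4) * (x + 1) ^ 3 * (3 * x + 2 * y + 2) /
          (2 * (2 * x + 1) * ((6 * x + 3 * y + 4) * (6 * x + 3 * y + 5)) ^ 2) =
      (gosperNumerator x y -
        ((3 * x + 3 * y + 1) * (3 * x + 3 * y + 2) /
          ((6 * x + 3 * y + 4) * (6 * x + 3 * y + 5))) ^ 2 * gosperNumerator x (y + 1)) /
        (18 * (2 * x + 1)) := by
  unfold gosperNumerator
  field_simp
  ring

theorem dougallTerm_succ_right_sub_succ_left (n k : ℕ) :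
    dougallTerm n (k + 1) - dougallTerm (n + 1) k =
      gosperTerm n (k + 1) - gosperTerm n (k + 1 + 1) := by
  have h := congrArg (dougallCore n (k + 1) * ·)
    (gosper_equation (x := n) (y := (k + 1 : ℕ)) n.cast_nonneg (k + 1).cast_nonneg)
  simp only [dougallTerm, gosperTerm, dougallCore_succ_left, dougallCore_succ_right n (k + 1)]
  push_cast at h ⊢
  linear_combination h

theorem dougallTerm_sub_dougallTerm_succ (n k : ℕ) :
    dougallTerm n k - dougallTerm (n + 1) k = dougallMate n k - dougallMate n (k + 1) := by
  unfold dougallMate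
  linear_combination dougallTerm_succ_right_sub_succ_left n k

theorem abs_gosperTerm_le (n k : ℕ) : |gosperTerm n k| ≤ 2 * (1 / ((k : ℝ) + 1) ^ 2) := by
  set c : ℝ := gosperNumerator n k / (18 * (2 * n + 1) * (3 * n + 2 * k + 1)) with hc
  have hc_nonneg : 0 ≤ c := by
    unfold c gosperNumerator
    positivity
  have hc_le : c ≤ 2 * (k + 1) := by
    unfold c gosperNumerator
    rw [div_le_iff₀ (by positivity), ← sub_nonneg]
    ring_nf
    positivity
  have hgosper : gosperTerm n k = c * dougallTerm n k := by
    rw [gosperTerm, dougallTerm, hc]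
    field_simp
  have hterm : |dougallTerm n k| ≤ 1 / ((k : ℝ) + 1) ^ 3 :=
    (abs_dougallTerm_le n k).trans <|
      mul_le_of_le_one_left (by positivity) (pow_le_one₀ (by norm_num) (by norm_num))
  calc |gosperTerm n k| = c * |dougallTerm n k| := by rw [hgosper, abs_mul, abs_of_nonneg hc_nonneg]
    _ ≤ 2 * (k + 1) * (1 / ((k : ℝ) + 1) ^ 3) := by gcongr
    _ = 2 * (1 / ((k : ℝ) + 1) ^ 2) := by field_simp

theorem tendsto_gosperTerm (n : ℕ) : Tendsto (gosperTerm n) atTop (𝓝 0) := by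
  have hlim := (summable_one_div_nat_add_one_pow one_lt_two).tendsto_atTop_zero.const_mul 2
  rw [mul_zero] at hlim
  exact squeeze_zero_norm (abs_gosperTerm_le n) hlim

theorem tendsto_dougallMate (n : ℕ) : Tendsto (dougallMate n) atTop (𝓝 0) := by
  have hF : Tendsto (dougallTerm n) atTop (𝓝 0) :=
    (summable_dougallTerm.prod_factor n).tendsto_atTop_zero
  rw [← add_zero 0]
  exact hF.add ((tendsto_add_atTop_iff_nat 1).mpr (tendsto_gosperTerm n))

theorem choose_sq_mul_choose_eq_factorial (m : ℕ) :
    ((6 * m).choose (3 * m) : ℝ) ^ 2 * (3 * m).choose m =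
      (6 * m)! ^ 2 / ((3 * m)! ^ 3 * (m ! * (2 * m)!)) := by
  have h₆ : ((6 * m).choose (3 * m) : ℝ) = (6 * m)! / ((3 * m)! * (3 * m)!) := by
    rw [show 6 * m = 3 * m + 3 * m by ring, Nat.cast_add_choose]
  have h₃ : ((3 * m).choose m : ℝ) = (3 * m)! / (m ! * (2 * m)!) := by
    rw [show 3 * m = m + 2 * m by ring, Nat.cast_add_choose]
  rw [h₆, h₃]
  field_simp

theorem dougallCore_zero_right (n : ℕ) :
    dougallCore n 0 =
      (-27) ^ n * (72 * (2 * n + 1) * (6 * n + 5) ^ 2) /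
        ((n + 1) ^ 3 * (3 * n + 1) ^ 2 * (3 * n + 2) *
          (((6 * (n + 1)).choose (3 * (n + 1)) : ℝ) ^ 2 * (3 * (n + 1)).choose (n + 1))) := by
  rw [choose_sq_mul_choose_eq_factorial]
  have h₆ : 6 * (n + 1) = 6 * n + 3 + 3 := by ring
  have h₃ : 3 * (n + 1) = 3 * n + 3 := by ring
  have h₂ : 2 * (n + 1) = 2 * n + 2 := by ring
  simp only [dougallCore, dougallWeight, dougallQuot, mul_zero, add_zero, h₆, h₃, h₂,
    Nat.factorial_succ]
  push_cast
  field_simp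
  ring

theorem dougallMate_zero_right_eq_mul_dougallCore (n : ℕ) :
    dougallMate n 0 =
      (3 * n + 1) * (72 * (2 * n + 1) * (6 * n + 5) ^ 2 +
          (3 * n + 1) * (117 * n ^ 2 + 189 * n + 76)) / (72 * (2 * n + 1) * (6 * n + 5) ^ 2) *
        dougallCore n 0 := by
  simp only [dougallMate, dougallTerm, gosperTerm, gosperNumerator, dougallCore_succ_right]
  push_cast
  field_simp
  ring

theorem dougallMate_zero_right (n : ℕ) :
    dougallMate n 0 =
      (-27 : ℝ) ^ n *
          (5535 * ((n : ℝ) + 1) ^ 3 - 4689 * ((n : ℝ) + 1) ^ 2 + 1110 * ((n : ℝ) + 1) - 80) /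
        (((n : ℝ) + 1) ^ 3 * (3 * ((n : ℝ) + 1) - 1) * (3 * ((n : ℝ) + 1) - 2) *
          (Nat.choose (6 * (n + 1)) (3 * (n + 1)) : ℝ) ^ 2 *
          (Nat.choose (3 * (n + 1)) (n + 1) : ℝ)) := by
  have h₁ : 3 * ((n : ℝ) + 1) - 1 = 3 * n + 2 := by ring
  have h₂ : 3 * ((n : ℝ) + 1) - 2 = 3 * n + 1 := by ring
  have hchoose₆ : ((6 * (n + 1)).choose (3 * (n + 1)) : ℝ) ≠ 0 :=
    Nat.cast_ne_zero.mpr (Nat.choose_ne_zero (by omega))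
  have hchoose₃ : ((3 * (n + 1)).choose (n + 1) : ℝ) ≠ 0 :=
    Nat.cast_ne_zero.mpr (Nat.choose_ne_zero (by omega))
  rw [dougallMate_zero_right_eq_mul_dougallCore, dougallCore_zero_right, h₁, h₂]
  field_simp
  ring

theorem chi3_mul_three_add (k j : ℕ) : chi3 (k * 3 + j) = chi3 j := by
  simp only [chi3, Nat.mul_add_mod_self_right]

theorem abs_chi3_le_one (n : ℕ) : |chi3 n| ≤ 1 := by
  unfold chi3
  split_ifs <;> simp

theorem summable_chi3_div_sq : Summable fun n : ℕ ↦ chi3 (n + 1) / ((n : ℝ) + 1) ^ 2 := by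
  refine (summable_one_div_nat_add_one_pow one_lt_two).of_norm_bounded fun n ↦ ?_
  rw [norm_div, Real.norm_of_nonneg (by positivity : (0 : ℝ) ≤ ((n : ℝ) + 1) ^ 2)]
  gcongr
  exact abs_chi3_le_one (n + 1)

theorem Kconst_eq_tsum_dougallTerm : Kconst = ∑' k, dougallTerm 0 k := by
  rw [Kconst, tsum_eq_tsum_sum_fin_mul_add summable_chi3_div_sq 3]
  refine tsum_congr fun k ↦ ?_
  have h₁ : chi3 1 = 1 := by simp [chi3]
  have h₂ : chi3 2 = -1 := by simp [chi3]
  have h₃ : chi3 3 = 0 := by simp [chi3]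
  simp only [Fin.sum_univ_three, dougallTerm_zero_left, add_assoc, chi3_mul_three_add]
  simp only [Fin.val_zero, Fin.val_one, Fin.val_two, zero_add, Nat.reduceAdd, h₁, h₂, h₃]
  push_cast
  ring

theorem stmt9 :
    Kconst = ∑' n : ℕ,
      (-27 : ℝ) ^ n *
          (5535 * ((n : ℝ) + 1) ^ 3 - 4689 * ((n : ℝ) + 1) ^ 2 + 1110 * ((n : ℝ) + 1) - 80) /
        (((n : ℝ) + 1) ^ 3 * (3 * ((n : ℝ) + 1) - 1) * (3 * ((n : ℝ) + 1) - 2) *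
          (Nat.choose (6 * (n + 1)) (3 * (n + 1)) : ℝ) ^ 2 *
          (Nat.choose (3 * (n + 1)) (n + 1) : ℝ)) := by
  have hmate := hasSum_of_wz_pair dougallTerm_sub_dougallTerm_succ summable_dougallTerm
    tendsto_dougallMate
  rw [Kconst_eq_tsum_dougallTerm, ← hmate.tsum_eq]
  exact tsum_congr dougallMate_zero_right
end
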